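/- arXiv:2212.14638 — 3 statements merged into one kernel-verified Lean document; each statement's English description precedes it below -/
import Mathlib

section
/- Let N be a positive integer, U an N×N complex unitary matrix, and v ∈ ℂ^N a unit vector. Let λ_1, …, λ_N : (0,1) → ℂ be differentiable functions such that for every t ∈ (0,1) the values λ_1(t), …, λ_N(t) are pairwise distinct and form exactly the spectrum of G(t) = U·A(t) (i.e. the multiset {λ_1(t), …, λ_N(t)} equals the multiset of roots of the characteristic polynomial of G(t)). Then for every j ∈ {1, …, N} and every t ∈ (0,1): λ_j'(t) = [(1 − |λ_j(t)|²)/(t·(1 − t²))] · (∏_{k=1}^N λ_k(t)) · ∏_{k ≠ j} (λ_j(t)·conj(λ_k(t)) − 1)/(λ_j(t) − λ_k(t)). -/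
open Matrix Polynomial Finset

noncomputable section

/-- The rank-one multiplicative perturbation `A(t) = I_N - (1-t) v v^*`. -/
def Apert {N : ℕ} (v : Fin N → ℂ) (t : ℝ) : Matrix (Fin N) (Fin N) ℂ :=
  1 - ((1 : ℂ) - (t : ℂ)) • vecMulVec v (star v)

/-- The `UA` model `G(t) = U · A(t)`. -/
def Gpert {N : ℕ} (U : Matrix (Fin N) (Fin N) ℂ) (v : Fin N → ℂ) (t : ℝ) :
    Matrix (Fin N) (Fin N) ℂ :=
  U * Apert v t

lemma det_affine {N : ℕ} (M : Matrix (Fin N) (Fin N) ℂ) (u w : Fin N → ℂ) :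
    ∃ b : ℂ, ∀ s : ℂ, (M + s • vecMulVec u w).det = M.det + s * b := by
  refine ⟨(fromBlocks M (replicateCol Unit (-u)) (replicateRow Unit w) 0).det, fun s => ?_⟩
  have h1 : (M + s • vecMulVec u w).det =
      (fromBlocks M (replicateCol Unit (-(s • u))) (replicateRow Unit w) 1).det := by
    rw [det_fromBlocks_one₂₂]
    congr 1
    ext i j
    simp [vecMulVec_apply, Matrix.mul_apply]
    ring
  have h2 : M.det = (fromBlocks M 0 (replicateRow Unit w) (1 : Matrix Unit Unit ℂ)).det := by
    rw [det_fromBlocks_one₂₂]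
    simp
  have key : ∀ (c : Fin N → ℂ) (d : Matrix Unit Unit ℂ),
      fromBlocks M (replicateCol Unit c) (replicateRow Unit w) d
      = updateCol (fromBlocks M 0 (replicateRow Unit w) 0) (Sum.inr ())
          (Sum.elim c (fun _ => d () ())) := by
    intro c d
    ext i j
    rcases i with i | i <;> rcases j with j | j <;> simp [updateCol_apply]
  have h0 : (0 : Matrix (Fin N) Unit ℂ) = replicateCol Unit 0 := by ext; simp
  rw [h1, h2]
  rw [key, key]
  conv_rhs => rw [h0, key]
  rw [← det_updateCol_smul, ← h0, ← det_updateCol_add]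
  congr 2
  ext i
  rcases i with i | i <;> simp

lemma Apert_eq {N : ℕ} (v : Fin N → ℂ) (hv : ∑ i, Complex.normSq (v i) = 1) :
    vecMulVec v (star v) * vecMulVec v (star v) = vecMulVec v (star v) := by
  have h : star v ⬝ᵥ v = 1 := by
    simp only [dotProduct, Pi.star_apply]
    rw [← Complex.ofReal_one, ← hv]
    push_cast
    refine Finset.sum_congr rfl fun i _ => ?_
    rw [Complex.normSq_eq_conj_mul_self]; rfl
  rw [vecMulVec_mul_vecMulVec, h]
  simp

lemma Apert_inv {N : ℕ} (v : Fin N → ℂ) (hv : ∑ i, Complex.normSq (v i) = 1) (t : ℝ)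
    (ht : t ≠ 0) : Apert v t⁻¹ * Apert v t = 1 := by
  have h := Apert_eq v hv
  unfold Apert
  rw [sub_mul, mul_sub, mul_sub, smul_mul_smul_comm, h]
  simp only [one_mul, mul_one]
  have : ((1:ℂ) - ((t⁻¹:ℝ):ℂ)) * (1 - t) = (1 - ((t⁻¹:ℝ):ℂ)) + (1 - t) := by
    have : (t:ℂ) ≠ 0 := by exact_mod_cast ht
    push_cast
    field_simp
    ring
  rw [this, add_smul]
  abel

lemma Apert_det {N : ℕ} (v : Fin N → ℂ) (hv : ∑ i, Complex.normSq (v i) = 1) (t : ℝ) :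
    (Apert v t).det = t := by
  have h : star v ⬝ᵥ v = 1 := by
    simp only [dotProduct, Pi.star_apply]
    rw [← Complex.ofReal_one, ← hv]
    push_cast
    refine Finset.sum_congr rfl fun i _ => ?_
    rw [Complex.normSq_eq_conj_mul_self]; rfl
  have : Apert v t = 1 + replicateCol Unit ((-(1 - (t:ℂ))) • v) * replicateRow Unit (star v) := by
    ext i j
    simp [Apert, vecMulVec_apply, Matrix.mul_apply]
    ring
  rw [this, det_one_add_replicateCol_mul_replicateRow, dotProduct_smul, h]
  simp

lemma Apert_herm {N : ℕ} (v : Fin N → ℂ) (t : ℝ) : (Apert v t)ᴴ = Apert v t := by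
  ext i j
  simp [Apert, vecMulVec_apply, Matrix.one_apply, eq_comm, mul_comm]

lemma Q_eq {N : ℕ} (U : Matrix (Fin N) (Fin N) ℂ) (hU : U ∈ Matrix.unitaryGroup (Fin N) ℂ)
    (v : Fin N → ℂ) (hv : ∑ i, Complex.normSq (v i) = 1) (t : ℝ) (ht : t ≠ 0) (z : ℂ) :
    (1 - z • (Gpert U v t)ᴴ).det * U.det
      = (-1) ^ N * (scalar (Fin N) z - Gpert U v t⁻¹).det * t := by
  have hUU : Uᴴ * U = 1 := (Matrix.mem_unitaryGroup_iff').1 hU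
  rw [← Apert_det v hv t, ← det_mul]
  have : ((-1:ℂ) ^ N) * (scalar (Fin N) z - Gpert U v t⁻¹).det
      = (Gpert U v t⁻¹ - scalar (Fin N) z).det := by
    rw [← neg_sub (Gpert U v t⁻¹), det_neg, Fintype.card_fin, ← mul_assoc, ← mul_pow]
    simp
  rw [this, ← det_mul]
  congr 1
  unfold Gpert
  rw [conjTranspose_mul, Apert_herm, sub_mul, sub_mul, one_mul, smul_mul_assoc, mul_assoc, hUU,
    mul_assoc, Apert_inv v hv t ht]
  simp [← smul_eq_diagonal_mul]

lemma aff {N : ℕ} (U : Matrix (Fin N) (Fin N) ℂ) (v : Fin N → ℂ) (z : ℂ) :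
    ∃ a b : ℂ, ∀ t : ℝ, (scalar (Fin N) z - Gpert U v t).det = a + t * b := by
  obtain ⟨b, hb⟩ := det_affine (scalar (Fin N) z - U) (U *ᵥ v) (star v)
  refine ⟨(scalar (Fin N) z - U).det + b, -b, fun t => ?_⟩
  have : scalar (Fin N) z - Gpert U v t
      = scalar (Fin N) z - U + (1 - (t:ℂ)) • vecMulVec (U *ᵥ v) (star v) := by
    rw [← mul_vecMulVec]
    unfold Gpert Apert
    rw [mul_sub, mul_smul_comm, mul_one]
    abel
  rw [this, hb]
  ring

/-- the differential equations satisfied by differentiable, pairwise distinct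
parametrizations `λ_1, …, λ_N` of the spectrum of `G(t)` on `(0,1)`. The condition that the
`λ_j(t)` form exactly the spectrum of `G(t)` (as a multiset, with multiplicity) is expressed
by the factorization of the characteristic polynomial. -/
theorem eigenvalue_ODE {N : ℕ} (hN : 0 < N)
    (U : Matrix (Fin N) (Fin N) ℂ) (hU : U ∈ Matrix.unitaryGroup (Fin N) ℂ)
    (v : Fin N → ℂ) (hv : ∑ i, Complex.normSq (v i) = 1)
    (l : Fin N → ℝ → ℂ)
    (hdiff : ∀ j, ∀ t ∈ Set.Ioo (0 : ℝ) 1, DifferentiableAt ℝ (l j) t)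
    (hdistinct : ∀ t ∈ Set.Ioo (0 : ℝ) 1, Function.Injective fun j => l j t)
    (hspec : ∀ t ∈ Set.Ioo (0 : ℝ) 1,
      Matrix.charpoly (Gpert U v t) = ∏ j, (X - C (l j t))) :
    ∀ j, ∀ t ∈ Set.Ioo (0 : ℝ) 1,
      deriv (l j) t
        = (((1 - Complex.normSq (l j t)) / (t * (1 - t ^ 2)) : ℝ) : ℂ)
            * (∏ k, l k t)
            * ∏ k ∈ univ.erase j, (l j t * (starRingEnd ℂ) (l k t) - 1) / (l j t - l k t) := by
  intro j t ht
  have ht0 : t ≠ 0 := ht.1.ne'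
  have htc : (t:ℂ) ≠ 0 := by exact_mod_cast ht0
  have ht2 : (1:ℂ) - (t:ℂ)^2 ≠ 0 := by
    have : (1:ℝ) - t^2 ≠ 0 := by nlinarith [ht.1, ht.2]
    exact_mod_cast this
  have hP : ∀ z : ℂ, ∀ s ∈ Set.Ioo (0:ℝ) 1,
      (scalar (Fin N) z - Gpert U v s).det = ∏ k, (z - l k s) := by
    intro z s hs
    rw [← eval_charpoly, hspec s hs, eval_prod]
    simp
  have hdetU : U.det ≠ 0 := by
    have hUU : Uᴴ * U = 1 := (Matrix.mem_unitaryGroup_iff').1 hU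
    intro h
    have := congrArg det hUU
    rw [det_mul, h] at this
    simp at this
  have hprod : ∏ k, l k t = t * U.det := by
    have h := hP 0 t ht
    simp only [map_zero, zero_sub, det_neg, Fintype.card_fin, Finset.prod_neg,
      Finset.card_univ] at h
    have h1 := mul_left_cancel₀ (pow_ne_zero _ (by norm_num)) h
    rw [← h1, Gpert, det_mul, Apert_det v hv, mul_comm]
  have hz : l j t ≠ 0 := by
    intro h
    have : ∏ k, l k t = 0 := Finset.prod_eq_zero (mem_univ j) h
    rw [hprod] at this
    exact (mul_ne_zero htc hdetU) this
  obtain ⟨a, b, hab⟩ := aff U v (l j t)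
  -- derivative
  have hder : HasDerivAt (fun s => ∏ k, (l j t - l k s))
      (∑ i, (∏ k ∈ univ.erase i, (l j t - l k t)) • (- deriv (l i) t)) t := by
    apply HasDerivAt.fun_finsetProd
    intro i _
    exact ((hdiff i t ht).hasDerivAt).const_sub _
  have hder2 : HasDerivAt (fun s : ℝ => a + (s:ℂ) * b) b t := by
    have := ((Complex.ofRealCLM.hasDerivAt (x := t)).mul_const b).const_add a
    simpa using this
  have hev : (fun s => ∏ k, (l j t - l k s)) =ᶠ[nhds t] (fun s : ℝ => a + (s:ℂ) * b) := by
    filter_upwards [isOpen_Ioo.mem_nhds ht] with s hs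
    rw [← hP _ s hs, hab]
  have hb := (hder2.congr_of_eventuallyEq hev).unique hder
  rw [Finset.sum_eq_single j] at hb
  rotate_left
  · intro i _ hij
    rw [Finset.prod_eq_zero (i := j) (by simp [hij.symm])] <;> simp
  · simp
  have hzero : a + t * b = 0 := by
    rw [← hab, hP _ t ht]
    exact Finset.prod_eq_zero (mem_univ j) (by simp)
  have hQ := Q_eq U hU v hv t ht0 (l j t)
  have hQ' : (1 - l j t • (Gpert U v t)ᴴ).det = ∏ k, (1 - l j t * (starRingEnd ℂ) (l k t)) := by
    have h := congrArg (starRingEnd ℂ) (hP ((starRingEnd ℂ) (l j t))⁻¹ t ht)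
    have h2 : (starRingEnd ℂ) (scalar (Fin N) ((starRingEnd ℂ) (l j t))⁻¹ - Gpert U v t).det
        = (scalar (Fin N) (l j t)⁻¹ - (Gpert U v t)ᴴ).det := by
      rw [starRingEnd_apply, ← det_conjTranspose, conjTranspose_sub]
      congr 2
      ext i k
      by_cases hik : i = k
      · subst hik; simp
      · simp [hik, Ne.symm hik]
    have h3 : 1 - l j t • (Gpert U v t)ᴴ
        = l j t • (scalar (Fin N) (l j t)⁻¹ - (Gpert U v t)ᴴ) := by
      rw [smul_sub]
      congr 1
      ext i k
      by_cases hik : i = k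
      · subst hik; simp [hz]
      · simp [hik]
    rw [h3, det_smul, ← h2, h, map_prod, ← Finset.card_univ, ← Finset.prod_const,
      ← Finset.prod_mul_distrib]
    refine Finset.prod_congr rfl fun k _ => ?_
    simp [mul_sub, hz]
  rw [hQ', hab, ← Finset.mul_prod_erase _ _ (mem_univ j)] at hQ
  have hsgn : ∏ k ∈ univ.erase j, (1 - l j t * (starRingEnd ℂ) (l k t))
      = (-1)^(N-1) * ∏ k ∈ univ.erase j, (l j t * (starRingEnd ℂ) (l k t) - 1) := by
    have : (univ.erase j).card = N - 1 := by simp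
    rw [← this, ← Finset.prod_neg]
    simp
  have hD : ∏ k ∈ univ.erase j, (l j t - l k t) ≠ 0 := by
    rw [Finset.prod_ne_zero_iff]
    intro k hk
    rw [sub_ne_zero]
    intro h
    exact (Finset.ne_of_mem_erase hk) (hdistinct t ht h).symm
  have hN1 : ((-1:ℂ))^N = - (-1)^(N-1) := by
    obtain ⟨m, rfl⟩ : ∃ m, N = m + 1 := ⟨N - 1, by omega⟩
    simp [pow_succ]
  rw [hsgn, hN1, Complex.mul_conj] at hQ
  rw [Finset.prod_div_distrib, hprod]
  have he : ((-1:ℂ))^(N-1) ≠ 0 := pow_ne_zero _ (by norm_num)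
  have ha : a = - (t * b) := eq_neg_of_add_eq_zero_left hzero
  generalize (∏ k ∈ univ.erase j, (l j t * (starRingEnd ℂ) (l k t) - 1)) = R at *
  generalize (∏ k ∈ univ.erase j, (l j t - l k t)) = D at *
  generalize ((-1:ℂ))^(N-1) = e at *
  have hQ2 : (1 - (Complex.normSq (l j t) : ℂ)) * R * U.det = -(b * (1 - (t:ℂ)^2)) := by
    apply mul_left_cancel₀ he
    rw [ha] at hQ
    push_cast at hQ
    field_simp at hQ
    linear_combination e * hQ
  push_cast
  rw [smul_eq_mul] at hb
  rw [show deriv (l j) t = - b / D by rw [hb]; field_simp]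
  field_simp
  linear_combination -hQ2

end
end

section
/- Let N ≥ 2 and let μ_N be the Haar probability measure on the unitary group U(N). For every x ∈ [0,1), the μ_N-measure of the set of U ∈ U(N) with |U_{11}|² ≤ x equals 1 − (1−x)^{N−1} (i.e. |U_{11}|² has the Beta(1, N−1) distribution). -/
open Matrix MeasureTheory

noncomputable section

instance matrixMeasurableSpace {N : ℕ} : MeasurableSpace (Matrix (Fin N) (Fin N) ℂ) :=
  MeasurableSpace.pi

lemma radial_tail (b s : ℝ) (hb : 0 < b) :
    ∫⁻ r in Set.Ioi s, ENNReal.ofReal (2 * b * r * Real.exp (-b * r ^ 2)) ∂volume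
      = ENNReal.ofReal (Real.exp (-b * s ^ 2)) ∨ s < 0 := by
  by_cases hs : s < 0
  · exact Or.inr hs
  left
  push Not at hs
  have hderiv : ∀ r ∈ Set.Ici s, HasDerivAt (fun r : ℝ => -Real.exp (-b * r ^ 2))
      (2 * b * r * Real.exp (-b * r ^ 2)) r := by
    intro r _
    have h := (((hasDerivAt_pow 2 r).const_mul (-b)).exp).neg
    exact h.congr_deriv (by push_cast; ring)
  have hpos : ∀ r ∈ Set.Ioi s, 0 ≤ 2 * b * r * Real.exp (-b * r ^ 2) := by
    intro r hr
    have : 0 ≤ r := hs.trans (le_of_lt hr)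
    positivity
  have hlim : Filter.Tendsto (fun r : ℝ => -Real.exp (-b * r ^ 2)) Filter.atTop (nhds 0) := by
    rw [← neg_zero]
    refine (Real.tendsto_exp_atBot.comp ?_).neg
    exact (Filter.tendsto_pow_atTop (by norm_num)).const_mul_atTop_of_neg (by linarith)
  have h := integral_Ioi_of_hasDerivAt_of_nonneg' hderiv hpos hlim
  have hi := integrableOn_Ioi_deriv_of_nonneg' hderiv hpos hlim
  rw [← ofReal_integral_eq_lintegral_ofReal hi
    ((ae_restrict_iff' measurableSet_Ioi).2 (Filter.Eventually.of_forall hpos)), h]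
  simp

lemma complex_tail (b t : ℝ) (hb : 0 < b) :
    ∫⁻ a : ℂ, (if t < Complex.normSq a then ENNReal.ofReal (Real.exp (-b * Complex.normSq a))
      else 0) = ENNReal.ofReal (Real.pi / b * Real.exp (-b * (Real.sqrt t) ^ 2)) := by
  rw [← Complex.lintegral_comp_polarCoord_symm]
  have h1 : ∀ p : ℝ × ℝ, Complex.normSq (Complex.polarCoord.symm p) = p.1 ^ 2 := by
    intro p
    rw [Complex.normSq_eq_norm_sq, Complex.norm_polarCoord_symm, sq_abs]
  simp only [h1, polarCoord_target]
  have hm : Measurable (fun p : ℝ × ℝ => ENNReal.ofReal p.1 • if t < p.1 ^ 2 then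
      ENNReal.ofReal (Real.exp (-b * p.1 ^ 2)) else 0) := by
    have hi : Measurable (fun p : ℝ × ℝ => if t < p.1 ^ 2 then
        ENNReal.ofReal (Real.exp (-b * p.1 ^ 2)) else 0) :=
      Measurable.ite (measurableSet_lt (by fun_prop) (by fun_prop)) (by fun_prop) (by fun_prop)
    have hr : Measurable (fun p : ℝ × ℝ => ENNReal.ofReal p.1) := by fun_prop
    exact hr.mul hi
  rw [Measure.volume_eq_prod, ← Measure.prod_restrict, lintegral_prod _ hm.aemeasurable]
  simp only [lintegral_const]
  have h2 : ∀ r ∈ Set.Ioi (0:ℝ), (ENNReal.ofReal r • if t < r ^ 2 then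
      ENNReal.ofReal (Real.exp (-b * r ^ 2)) else 0) *
        (volume.restrict (Set.Ioo (-Real.pi) Real.pi)) Set.univ =
      ENNReal.ofReal (Real.pi / b) * (Set.Ioi (Real.sqrt t)).indicator
        (fun r => ENNReal.ofReal (2 * b * r * Real.exp (-b * r ^ 2))) r := by
    intro r hr
    have hr : 0 < r := hr
    have hiff : t < r ^ 2 ↔ r ∈ Set.Ioi (Real.sqrt t) := by
      rw [Set.mem_Ioi, Real.sqrt_lt' hr]
    simp only [Set.indicator, ← hiff, Measure.restrict_apply MeasurableSet.univ, Set.univ_inter,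
      Real.volume_Ioo]
    split_ifs
    · rw [smul_eq_mul, ← ENNReal.ofReal_mul hr.le, ← ENNReal.ofReal_mul (by positivity),
        ← ENNReal.ofReal_mul (by positivity)]
      congr 1
      field_simp
      ring
    · simp
  rw [setLIntegral_congr_fun measurableSet_Ioi h2, lintegral_const_mul' _ _ ENNReal.ofReal_ne_top,
    setLIntegral_indicator measurableSet_Ioi, Set.inter_eq_left.2
      (Set.Ioi_subset_Ioi (Real.sqrt_nonneg t)),
    (radial_tail b (Real.sqrt t) hb).resolve_right (not_lt.2 (Real.sqrt_nonneg t)),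
    ← ENNReal.ofReal_mul (by positivity)]

lemma lintegral_split (n : ℕ) (f : (Fin (n + 1) → ℂ) → ENNReal) (hf : Measurable f) :
    ∫⁻ z, f z = ∫⁻ w : Fin n → ℂ, ∫⁻ a : ℂ, f (Fin.cons a w) := by
  have h := (volume_preserving_piFinSuccAbove (fun _ : Fin (n + 1) => ℂ) 0).symm
  rw [← h.lintegral_comp hf, Measure.volume_eq_prod, lintegral_prod_symm' _ (by fun_prop)]
  simp [MeasurableEquiv.piFinSuccAbove]
  rfl

lemma gauss_total (n : ℕ) (b : ℝ) (hb : 0 < b) :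
    ∫⁻ w : Fin n → ℂ, ENNReal.ofReal (Real.exp (-b * ∑ i, Complex.normSq (w i))) =
      ENNReal.ofReal ((Real.pi / b) ^ n) := by
  have hc : Continuous Complex.normSq := Complex.continuous_normSq
  induction n with
  | zero => simp [lintegral_unique, volume_pi]
  | succ n ih =>
    rw [lintegral_split _ _ (by fun_prop)]
    have h := complex_tail b (-1) hb
    have h3 : ∀ a : ℂ, (-1 : ℝ) < Complex.normSq a := fun a =>
      lt_of_lt_of_le (by norm_num) (Complex.normSq_nonneg a)
    simp only [h3, if_true, Real.sqrt_eq_zero_of_nonpos (show (-1:ℝ) ≤ 0 by norm_num)] at h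
    simp only [Fin.sum_univ_succ, Fin.cons_zero, Fin.cons_succ, mul_add, Real.exp_add,
      ENNReal.ofReal_mul (Real.exp_nonneg _)]
    have h4 : ∀ w : Fin n → ℂ, ∫⁻ a : ℂ, ENNReal.ofReal (Real.exp (-b * Complex.normSq a)) *
        ENNReal.ofReal (Real.exp (-b * ∑ i, Complex.normSq (w i))) =
        ENNReal.ofReal (Real.pi / b) *
          ENNReal.ofReal (Real.exp (-b * ∑ i, Complex.normSq (w i))) := by
      intro w
      rw [lintegral_mul_const' _ _ ENNReal.ofReal_ne_top, h]
      simp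
    simp only [h4]
    rw [lintegral_const_mul' _ _ ENNReal.ofReal_ne_top, ih, ← ENNReal.ofReal_mul (by positivity),
      pow_succ']

/-- Gaussian weight of the region `x |z|² < |z₀|²`. -/
lemma gauss_region (n : ℕ) (x : ℝ) (hx0 : 0 ≤ x) (hx1 : x < 1) :
    ∫⁻ z : Fin (n + 1) → ℂ, (if x * ∑ i, Complex.normSq (z i) < Complex.normSq (z 0) then
      ENNReal.ofReal (Real.exp (-1 * ∑ i, Complex.normSq (z i))) else 0) =
      ENNReal.ofReal (Real.pi ^ (n + 1) * (1 - x) ^ n) := by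
  have hc : Continuous Complex.normSq := Complex.continuous_normSq
  have h1x : 0 < 1 - x := by linarith
  rw [lintegral_split]
  swap
  · exact Measurable.ite (measurableSet_lt (by fun_prop) (by fun_prop)) (by fun_prop) (by fun_prop)
  have key : ∀ w : Fin n → ℂ, ∫⁻ a : ℂ,
      (if x * ∑ i, Complex.normSq ((Fin.cons a w : Fin (n + 1) → ℂ) i) <
        Complex.normSq ((Fin.cons a w : Fin (n + 1) → ℂ) 0) then
      ENNReal.ofReal (Real.exp (-1 * ∑ i, Complex.normSq ((Fin.cons a w : Fin (n + 1) → ℂ) i)))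
        else 0) = ENNReal.ofReal Real.pi *
          ENNReal.ofReal (Real.exp (-(1 / (1 - x)) * ∑ i, Complex.normSq (w i))) := by
    intro w
    have hS : 0 ≤ ∑ i, Complex.normSq (w i) :=
      Finset.sum_nonneg fun i _ => Complex.normSq_nonneg _
    set S := ∑ i, Complex.normSq (w i) with hSdef
    have h := complex_tail 1 (x / (1 - x) * S) one_pos
    rw [Real.sq_sqrt (by positivity)] at h
    have h5 : ∀ a : ℂ, (if x * ∑ i, Complex.normSq ((Fin.cons a w : Fin (n + 1) → ℂ) i) <
        Complex.normSq ((Fin.cons a w : Fin (n + 1) → ℂ) 0) then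
      ENNReal.ofReal (Real.exp (-1 * ∑ i, Complex.normSq ((Fin.cons a w : Fin (n + 1) → ℂ) i)))
        else 0) = (if x / (1 - x) * S < Complex.normSq a then
          ENNReal.ofReal (Real.exp (-1 * Complex.normSq a)) else 0) *
            ENNReal.ofReal (Real.exp (-1 * S)) := by
      intro a
      simp only [Fin.sum_univ_succ, Fin.cons_zero, Fin.cons_succ, ← hSdef]
      have hiff : x * (Complex.normSq a + S) < Complex.normSq a ↔
          x / (1 - x) * S < Complex.normSq a := by
        rw [div_mul_eq_mul_div, div_lt_iff₀ h1x]
        constructor <;> intro h <;> linarith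
      simp only [hiff]
      split_ifs
      · rw [mul_add, Real.exp_add, ENNReal.ofReal_mul (Real.exp_nonneg _)]
      · simp
    simp only [h5]
    rw [lintegral_mul_const' _ _ ENNReal.ofReal_ne_top, h,
      ← ENNReal.ofReal_mul (by positivity), ← ENNReal.ofReal_mul (by positivity), mul_assoc,
      ← Real.exp_add, div_one]
    congr 3
    field_simp
    ring
  simp only [key]
  rw [lintegral_const_mul' _ _ ENNReal.ofReal_ne_top, gauss_total _ _ (by positivity),
    ← ENNReal.ofReal_mul (by positivity)]
  congr 1
  rw [div_div_eq_mul_div, div_one, mul_pow, pow_succ]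
  ring

lemma unitary_normSum {N : ℕ} (U : Matrix.unitaryGroup (Fin N) ℂ) (z : Fin N → ℂ) :
    ∑ i, Complex.normSq (((U : Matrix (Fin N) (Fin N) ℂ) *ᵥ z) i) = ∑ i, Complex.normSq (z i) := by
  have h : ∀ z : Fin N → ℂ, ((∑ i, Complex.normSq (z i) : ℝ) : ℂ) = star z ⬝ᵥ z := by
    intro z
    simp [dotProduct, Complex.normSq_eq_conj_mul_self]
  apply Complex.ofReal_injective
  rw [h, h, star_mulVec, dotProduct_mulVec, vecMul_vecMul, ← dotProduct_mulVec]
  have : (U : Matrix (Fin N) (Fin N) ℂ)ᴴ * (U : Matrix (Fin N) (Fin N) ℂ) = 1 :=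
    (Matrix.mem_unitaryGroup_iff'.1 U.2)
  rw [this, one_mulVec]

lemma unitary_preserving {N : ℕ} (U : Matrix.unitaryGroup (Fin N) ℂ) :
    MeasurePreserving (fun z : Fin N → ℂ => (U : Matrix (Fin N) (Fin N) ℂ) *ᵥ z) := by
  have hdet : LinearMap.det ((Matrix.toLin' (U : Matrix (Fin N) (Fin N) ℂ)).restrictScalars ℝ)
      = 1 := by
    rw [LinearMap.det_restrictScalars, Algebra.norm_complex_apply, LinearMap.det_toLin']
    have h := Matrix.det_of_mem_unitary U.2
    rw [Complex.normSq_eq_norm_sq, CStarRing.norm_of_mem_unitary h]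
    norm_num
  have h := Measure.map_linearMap_addHaar_eq_smul_addHaar (volume : Measure (Fin N → ℂ))
    (f := (Matrix.toLin' (U : Matrix (Fin N) (Fin N) ℂ)).restrictScalars ℝ) (by simp [hdet])
  rw [hdet] at h
  refine ⟨?_, ?_⟩
  · exact Continuous.measurable (by fun_prop)
  · rw [abs_inv, abs_one, inv_one, ENNReal.ofReal_one, one_smul] at h
    exact h

lemma exists_unitary {n : ℕ} (z : Fin (n + 1) → ℂ) (hz : z ≠ 0) :
    ∃ V : Matrix.unitaryGroup (Fin (n + 1)) ℂ, ∃ c : ℂ, c ≠ 0 ∧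
      z = c • fun i => (V : Matrix (Fin (n + 1)) (Fin (n + 1)) ℂ) i 0 := by
  set v : EuclideanSpace ℂ (Fin (n + 1)) := WithLp.toLp 2 z with hv
  have hv0 : v ≠ 0 := by
    intro h; apply hz; ext i; exact congrArg (fun w : EuclideanSpace ℂ (Fin (n+1)) => w i) h
  have hn : ‖v‖ ≠ 0 := norm_ne_zero_iff.2 hv0
  have ho : Orthonormal ℂ (({0} : Set (Fin (n + 1))).domRestrict
      (fun _ : Fin (n + 1) => ((‖v‖ : ℂ)⁻¹) • v)) := by
    constructor
    · intro i
      change ‖((‖v‖ : ℂ)⁻¹) • v‖ = 1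
      rw [norm_smul, norm_inv, Complex.norm_real, norm_norm, inv_mul_cancel₀ hn]
    · intro i j hij
      exact absurd (Subsingleton.elim i j) hij
  obtain ⟨b, hb⟩ := ho.exists_orthonormalBasis_extension_of_card_eq (by simp)
  refine ⟨⟨_, (EuclideanSpace.basisFun (Fin (n + 1)) ℂ).toMatrix_orthonormalBasis_mem_unitary b⟩,
    ‖v‖, by exact_mod_cast hn, ?_⟩
  ext i
  have h0 := hb 0 rfl
  have hn' : (‖v‖ : ℂ) ≠ 0 := by exact_mod_cast hn
  simp only [Pi.smul_apply, smul_eq_mul, Module.Basis.toMatrix_apply, h0]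
  simp [hv]
  rw [mul_inv_cancel_left₀ hn']

lemma entry_measurable {N : ℕ} (i j : Fin N) :
    Measurable (fun U : Matrix.unitaryGroup (Fin N) ℂ => (U : Matrix (Fin N) (Fin N) ℂ) i j) := by
  have h1 : Measurable (fun U : Matrix.unitaryGroup (Fin N) ℂ => (U : Matrix (Fin N) (Fin N) ℂ)) :=
    measurable_subtype_coe
  exact (measurable_pi_apply j).comp ((measurable_pi_apply i).comp h1)

lemma mul_measurable {N : ℕ} (V : Matrix.unitaryGroup (Fin N) ℂ) :
    Measurable (fun U : Matrix.unitaryGroup (Fin N) ℂ => V * U) := by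
  refine Measurable.subtype_mk ?_
  refine measurable_pi_lambda _ fun i => measurable_pi_lambda _ fun j => ?_
  simp only [Matrix.mul_apply]
  exact Finset.measurable_sum _ fun k _ => (entry_measurable k j).const_mul _

lemma pair_apply {N : ℕ} (U : Matrix.unitaryGroup (Fin N) ℂ) (z : Fin N → ℂ) (j : Fin N) :
    (((U⁻¹ : Matrix.unitaryGroup (Fin N) ℂ) : Matrix (Fin N) (Fin N) ℂ) *ᵥ z) j =
      ∑ i, star ((U : Matrix (Fin N) (Fin N) ℂ) i j) * z i := by
  rfl

lemma tail_eq {n : ℕ} (μ : Measure (Matrix.unitaryGroup (Fin (n + 1)) ℂ)) [IsProbabilityMeasure μ]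
    (hinv : ∀ V : Matrix.unitaryGroup (Fin (n + 1)) ℂ,
      μ.map (fun U : Matrix.unitaryGroup (Fin (n + 1)) ℂ => V * U) = μ)
    (x : ℝ) (hx0 : 0 ≤ x) (hx1 : x < 1) :
    μ {U : Matrix.unitaryGroup (Fin (n + 1)) ℂ |
        x < Complex.normSq ((U : Matrix (Fin (n + 1)) (Fin (n + 1)) ℂ) 0 0)}
      = ENNReal.ofReal ((1 - x) ^ n) := by
  have hc : Continuous Complex.normSq := Complex.continuous_normSq
  let F : Matrix.unitaryGroup (Fin (n + 1)) ℂ → (Fin (n + 1) → ℂ) → ENNReal := fun U z =>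
    if x * ∑ i, Complex.normSq (z i) <
      Complex.normSq ((((U⁻¹ : Matrix.unitaryGroup (Fin (n + 1)) ℂ) :
        Matrix (Fin (n + 1)) (Fin (n + 1)) ℂ) *ᵥ z) 0) then
      ENNReal.ofReal (Real.exp (-1 * ∑ i, Complex.normSq (z i))) else 0
  have hF : Measurable (Function.uncurry F) := by
    refine Measurable.ite (measurableSet_lt (by fun_prop) ?_) (by fun_prop) (by fun_prop)
    refine hc.measurable.comp ?_
    simp only [pair_apply]
    refine Finset.measurable_sum _ fun i _ => Measurable.mul ?_ (by fun_prop)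
    exact continuous_star.measurable.comp ((entry_measurable i 0).comp measurable_fst)
  set S := {U : Matrix.unitaryGroup (Fin (n + 1)) ℂ |
        x < Complex.normSq ((U : Matrix (Fin (n + 1)) (Fin (n + 1)) ℂ) 0 0)} with hSdef
  have hS : MeasurableSet S :=
    measurableSet_lt measurable_const (hc.measurable.comp (entry_measurable 0 0))
  have hL : ∀ U, ∫⁻ z, F U z = ENNReal.ofReal (Real.pi ^ (n + 1) * (1 - x) ^ n) := by
    intro U
    have hm : Measurable (fun z : Fin (n + 1) → ℂ =>
        if x * ∑ i, Complex.normSq (z i) < Complex.normSq (z 0) then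
          ENNReal.ofReal (Real.exp (-1 * ∑ i, Complex.normSq (z i))) else 0) :=
      Measurable.ite (measurableSet_lt (by fun_prop) (by fun_prop)) (by fun_prop)
        (by fun_prop)
    have h := (unitary_preserving U⁻¹).lintegral_comp hm
    rw [gauss_region n x hx0 hx1] at h
    rw [← h]
    simp only [unitary_normSum, F]
  have hR : ∀ z : Fin (n + 1) → ℂ, z ≠ 0 → ∫⁻ U, F U z ∂μ =
      ENNReal.ofReal (Real.exp (-1 * ∑ i, Complex.normSq (z i))) * μ S := by
    intro z hz
    obtain ⟨V, c, hc0, hzV⟩ := exists_unitary z hz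
    have hcol : (fun i => (V : Matrix (Fin (n + 1)) (Fin (n + 1)) ℂ) i 0) =
        (V : Matrix (Fin (n + 1)) (Fin (n + 1)) ℂ) *ᵥ Pi.single 0 1 := by
      ext i; simp
    have hsum : ∑ i, Complex.normSq (z i) = Complex.normSq c := by
      rw [hzV, hcol]
      simp only [Pi.smul_apply, smul_eq_mul, map_mul]
      rw [← Finset.mul_sum, unitary_normSum]
      rw [Finset.sum_eq_single 0] <;> simp +contextual
    have hpair : ∀ U : Matrix.unitaryGroup (Fin (n + 1)) ℂ,
        Complex.normSq ((((U⁻¹ : Matrix.unitaryGroup (Fin (n + 1)) ℂ) :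
        Matrix (Fin (n + 1)) (Fin (n + 1)) ℂ) *ᵥ z) 0) = Complex.normSq c *
          Complex.normSq (((V⁻¹ * U : Matrix.unitaryGroup (Fin (n + 1)) ℂ) :
            Matrix (Fin (n + 1)) (Fin (n + 1)) ℂ) 0 0) := by
      intro U
      have h1 : (((V⁻¹ * U : Matrix.unitaryGroup (Fin (n + 1)) ℂ) :
            Matrix (Fin (n + 1)) (Fin (n + 1)) ℂ) 0 0) =
          star ((((U⁻¹ * V : Matrix.unitaryGroup (Fin (n + 1)) ℂ) :
            Matrix (Fin (n + 1)) (Fin (n + 1)) ℂ) 0 0)) := by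
        have : V⁻¹ * U = (U⁻¹ * V)⁻¹ := by group
        rw [this]; rfl
      rw [h1, hzV, mulVec_smul, Pi.smul_apply, smul_eq_mul, map_mul]
      congr 1
      change _ = Complex.normSq ((starRingEnd ℂ) _)
      rw [Complex.normSq_conj]
      rfl
    have hcpos : 0 < Complex.normSq c := Complex.normSq_pos.2 hc0
    have hFe : ∀ U, F U z = S.indicator (fun _ =>
        ENNReal.ofReal (Real.exp (-1 * ∑ i, Complex.normSq (z i)))) (V⁻¹ * U) := by
      intro U
      simp only [F, hpair, Set.indicator, hSdef, Set.mem_ofPred_eq]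
      rw [hsum, mul_comm x]
      simp only [mul_lt_mul_iff_right₀ hcpos]
    simp only [hFe]
    rw [← lintegral_map (measurable_const.indicator hS) (mul_measurable V⁻¹), hinv,
      lintegral_indicator_const hS]
  have hswap := lintegral_lintegral_swap (μ := μ) (ν := (volume : Measure (Fin (n + 1) → ℂ)))
    (f := F) hF.aemeasurable
  have hae : ∀ᵐ z : Fin (n + 1) → ℂ, z ≠ 0 := by
    rw [ae_iff]; simp
  simp only [hL] at hswap
  rw [lintegral_congr_ae (hae.mono hR), lintegral_mul_const' _ _ (measure_ne_top _ _),
    gauss_total _ _ one_pos, lintegral_const, measure_univ, mul_one, div_one,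
    ENNReal.ofReal_mul (by positivity)] at hswap
  exact ((ENNReal.mul_right_inj (by simp [Real.pi_pos])
    ENNReal.ofReal_ne_top).1 hswap).symm

/-- under the Haar probability measure on `U(N)` (formalized as a
left-invariant probability measure on the unitary group), `|U_{11}|²` has the
`Beta(1, N-1)` distribution: for `x ∈ [0,1)` the measure of `{|U_{11}|² ≤ x}` is
`1 - (1-x)^(N-1)`. -/
theorem entry_beta_distribution {N : ℕ} (hN : 2 ≤ N)
    (μ : Measure (Matrix.unitaryGroup (Fin N) ℂ)) [IsProbabilityMeasure μ]
    (hinv : ∀ V : Matrix.unitaryGroup (Fin N) ℂ,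
      μ.map (fun U : Matrix.unitaryGroup (Fin N) ℂ => V * U) = μ)
    (x : ℝ) (hx0 : 0 ≤ x) (hx1 : x < 1) :
    μ {U : Matrix.unitaryGroup (Fin N) ℂ |
        Complex.normSq ((U : Matrix (Fin N) (Fin N) ℂ) ⟨0, by omega⟩ ⟨0, by omega⟩) ≤ x}
      = ENNReal.ofReal (1 - (1 - x) ^ (N - 1)) := by
  obtain ⟨n, rfl⟩ : ∃ n, N = n + 1 := ⟨N - 1, by omega⟩
  have h := tail_eq μ hinv x hx0 hx1
  have hS : MeasurableSet {U : Matrix.unitaryGroup (Fin (n + 1)) ℂ |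
        x < Complex.normSq ((U : Matrix (Fin (n + 1)) (Fin (n + 1)) ℂ) 0 0)} :=
    measurableSet_lt measurable_const
      (Complex.continuous_normSq.measurable.comp (entry_measurable 0 0))
  have h2 := prob_compl_eq_one_sub (μ := μ) hS
  rw [h, ← ENNReal.ofReal_one, ← ENNReal.ofReal_sub _ (pow_nonneg (by linarith) _)] at h2
  rw [Nat.add_sub_cancel, ← h2]
  congr 1
  ext U
  simp only [Set.mem_ofPred_eq, Set.mem_compl_iff, not_lt]
  rfl

end
end

section
/- Let N be a positive integer, U an N×N complex unitary matrix, and v ∈ ℂ^N a unit vector. Suppose e^{iθ} is a simple eigenvalue of U with unit eigenvector u (i.e. U u = e^{iθ} u, |u| = 1). Let η > 0 and let λ : (1−η, 1] → ℂ be a function such that λ(1) = e^{iθ}, λ(t) is an eigenvalue of G(t) = U·A(t) for every t ∈ (1−η, 1], and λ is differentiable at t = 1 (one-sided). Then λ'(1) = e^{iθ} · |⟨u, v⟩|². -/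
open Matrix

noncomputable section

/-- Left eigenvector relation for a unitary matrix. -/
lemma left_eig {N : ℕ} (U : Matrix (Fin N) (Fin N) ℂ) (hU : U ∈ Matrix.unitaryGroup (Fin N) ℂ)
    (c : ℂ) (hc : c * star c = 1) (u : Fin N → ℂ) (heig : U *ᵥ u = c • u) :
    star u ᵥ* U = c • star u := by
  have h1 : star u ᵥ* Uᴴ = star c • star u := by
    rw [← star_mulVec, heig, star_smul]
  have h2 : Uᴴ * U = 1 := Matrix.mem_unitaryGroup_iff'.mp hU
  have h3 : (star u ᵥ* Uᴴ) ᵥ* U = star u := by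
    rw [vecMul_vecMul, h2, vecMul_one]
  rw [h1, smul_vecMul] at h3
  calc star u ᵥ* U = (c * star c) • (star u ᵥ* U) := by rw [hc, one_smul]
    _ = c • star u := by rw [mul_smul, h3]

/-- The bordered matrix is nonsingular at a simple eigenvalue. -/
lemma det_bordered {N : ℕ} (U : Matrix (Fin N) (Fin N) ℂ) (c : ℂ) (u : Fin N → ℂ)
    (huu : star u ⬝ᵥ u = 1) (heig : U *ᵥ u = c • u) (hleft : star u ᵥ* U = c • star u)
    (hsimple : (Matrix.charpoly U).rootMultiplicity c = 1) :
    (U - c • (1 : Matrix (Fin N) (Fin N) ℂ) + vecMulVec u (star u)).det ≠ 0 := by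
  intro h0
  obtain ⟨y, hy0, hy⟩ := Matrix.exists_mulVec_eq_zero_iff.mpr h0
  rw [add_mulVec, sub_mulVec, smul_mulVec, one_mulVec, vecMulVec_mulVec, op_smul_eq_smul] at hy
  have h1 : star u ⬝ᵥ y = 0 := by
    have := congrArg (fun z => star u ⬝ᵥ z) hy
    simp only [dotProduct_add, dotProduct_sub, dotProduct_smul, dotProduct_zero, huu,
      dotProduct_mulVec, hleft, smul_dotProduct, smul_eq_mul] at this
    linear_combination this
  rw [h1, zero_smul, add_zero, sub_eq_zero] at hy
  have hle := LinearMap.finrank_eigenspace_le (Matrix.toLin' U) c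
  rw [Matrix.charpoly_toLin', hsimple, finrank_le_one_iff] at hle
  obtain ⟨w, hw⟩ := hle
  have memu : u ∈ Module.End.eigenspace (Matrix.toLin' U) c := by
    rw [Module.End.mem_eigenspace_iff, Matrix.toLin'_apply, heig]
  have memy : y ∈ Module.End.eigenspace (Matrix.toLin' U) c := by
    rw [Module.End.mem_eigenspace_iff, Matrix.toLin'_apply, hy]
  obtain ⟨a, ha⟩ := hw ⟨u, memu⟩
  obtain ⟨b, hb⟩ := hw ⟨y, memy⟩
  have ha' : a • (w : Fin N → ℂ) = u := congrArg Subtype.val ha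
  have hb' : b • (w : Fin N → ℂ) = y := congrArg Subtype.val hb
  have e1 : a * (star u ⬝ᵥ (w : Fin N → ℂ)) = 1 := by
    rw [← smul_eq_mul, ← dotProduct_smul, ha', huu]
  have e2 : b * (star u ⬝ᵥ (w : Fin N → ℂ)) = 0 := by
    rw [← smul_eq_mul, ← dotProduct_smul, hb', h1]
  have hb0 : b = 0 := by linear_combination a * e2 - b * e1
  apply hy0
  rw [← hb', hb0, zero_smul]

/-- The algebraic (secular) identity satisfied by a perturbed eigenvalue. -/
lemma secular {N : ℕ} (U : Matrix (Fin N) (Fin N) ℂ) (c : ℂ) (u v : Fin N → ℂ)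
    (huu : star u ⬝ᵥ u = 1) (heig : U *ᵥ u = c • u) (hleft : star u ᵥ* U = c • star u)
    (m s : ℂ) (D : Matrix (Fin N) (Fin N) ℂ)
    (hD : D = U - m • (1 : Matrix (Fin N) (Fin N) ℂ) + vecMulVec u (star u))
    (q : ℂ) (hq : q = star v ⬝ᵥ (D.adjugate *ᵥ (U *ᵥ v)))
    (hdet : (U * (1 - s • vecMulVec v (star v)) - m • (1 : Matrix (Fin N) (Fin N) ℂ)).det = 0)
    (hD0 : D.det ≠ 0) (hK : (1 - (m - c)) * (D.det - s * q) ≠ 0) :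
    -(m - c) * ((1 - (m - c)) * (D.det - s * q))
      = s * c * (star u ⬝ᵥ v) * D.det * (star v ⬝ᵥ u) := by
  obtain ⟨x, hx0, hx⟩ := Matrix.exists_mulVec_eq_zero_iff.mpr hdet
  have hx1 : U *ᵥ x - (s * (star v ⬝ᵥ x)) • (U *ᵥ v) - m • x = 0 := by
    rw [← hx, sub_mulVec, ← mulVec_mulVec, sub_mulVec, smul_mulVec, smul_mulVec, one_mulVec,
      vecMulVec_mulVec, op_smul_eq_smul, mulVec_sub, smul_smul, mulVec_smul]
  have e1 : -(m - c) * (star u ⬝ᵥ x) = s * c * (star u ⬝ᵥ v) * (star v ⬝ᵥ x) := by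
    have := congrArg (fun z => star u ⬝ᵥ z) hx1
    simp only [dotProduct_sub, dotProduct_smul, dotProduct_zero,
      dotProduct_mulVec, hleft, smul_dotProduct, smul_eq_mul] at this
    linear_combination this
  have hDx : D *ᵥ x = (star u ⬝ᵥ x) • u + (s * (star v ⬝ᵥ x)) • (U *ᵥ v) := by
    rw [hD, add_mulVec, sub_mulVec, smul_mulVec, one_mulVec, vecMulVec_mulVec, op_smul_eq_smul]
    linear_combination hx1
  have hDu : D *ᵥ u = (1 - (m - c)) • u := by
    rw [hD, add_mulVec, sub_mulVec, smul_mulVec, one_mulVec, vecMulVec_mulVec, op_smul_eq_smul,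
      huu, heig]
    module
  have adjmul : ∀ z, D.adjugate *ᵥ (D *ᵥ z) = D.det • z := by
    intro z
    rw [mulVec_mulVec, adjugate_mul, smul_mulVec, one_mulVec]
  have hx2 : D.det • x = (star u ⬝ᵥ x) • (D.adjugate *ᵥ u)
      + (s * (star v ⬝ᵥ x)) • (D.adjugate *ᵥ (U *ᵥ v)) := by
    rw [← adjmul, hDx, mulVec_add, mulVec_smul, mulVec_smul]
  have hu2 : (1 - (m - c)) • (D.adjugate *ᵥ u) = D.det • u := by
    rw [← adjmul, hDu, mulVec_smul]
  have e2 := congrArg (fun z => star v ⬝ᵥ z) hx2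
  have e3 := congrArg (fun z => star v ⬝ᵥ z) hu2
  simp only [dotProduct_add, dotProduct_smul, smul_eq_mul, ← hq] at e2 e3
  have e4 : (1 - (m - c)) * (D.det - s * q) * (star v ⬝ᵥ x)
      = D.det * (star u ⬝ᵥ x) * (star v ⬝ᵥ u) := by
    linear_combination (1 - (m - c)) * e2 + (star u ⬝ᵥ x) * e3
  have hux : star u ⬝ᵥ x ≠ 0 := by
    intro h
    rw [h, mul_zero, zero_mul] at e4
    have hvx := (mul_eq_zero.mp e4).resolve_left hK
    rw [h, hvx] at hx2
    simp only [zero_smul, mul_zero, add_zero, smul_eq_zero] at hx2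
    exact hx2.elim hD0 hx0
  apply mul_right_cancel₀ hux
  linear_combination (1 - (m - c)) * (D.det - s * q) * e1 + s * c * (star u ⬝ᵥ v) * e4

lemma star_dot_self {N : ℕ} (u : Fin N → ℂ) (hu : ∑ i, Complex.normSq (u i) = 1) :
    star u ⬝ᵥ u = 1 := by
  have : ((∑ i, Complex.normSq (u i) : ℝ) : ℂ) = 1 := by rw [hu]; simp
  rw [← this]
  push_cast
  simp only [dotProduct, Pi.star_apply]
  refine Finset.sum_congr rfl fun i _ => ?_
  rw [Complex.normSq_eq_conj_mul_self]; rfl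

/-- if `e^{iθ}` is a simple eigenvalue of `U` with unit eigenvector `u`, and
`λ : (1-η, 1] → ℂ` is an eigenvalue trajectory of `G(t)` with `λ(1) = e^{iθ}` that has a
one-sided derivative `d` at `t = 1`, then `d = e^{iθ} |⟨u, v⟩|²`. -/
theorem initial_velocity {N : ℕ} (hN : 0 < N)
    (U : Matrix (Fin N) (Fin N) ℂ) (hU : U ∈ Matrix.unitaryGroup (Fin N) ℂ)
    (v : Fin N → ℂ) (hv : ∑ i, Complex.normSq (v i) = 1)
    (θ : ℝ) (u : Fin N → ℂ) (hu : ∑ i, Complex.normSq (u i) = 1)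
    (heig : U *ᵥ u = Complex.exp ((θ : ℂ) * Complex.I) • u)
    (hsimple : (Matrix.charpoly U).rootMultiplicity (Complex.exp ((θ : ℂ) * Complex.I)) = 1)
    (η : ℝ) (hη : 0 < η) (l : ℝ → ℂ)
    (hl1 : l 1 = Complex.exp ((θ : ℂ) * Complex.I))
    (hleig : ∀ t ∈ Set.Ioc (1 - η) (1 : ℝ),
      (Gpert U v t - l t • (1 : Matrix (Fin N) (Fin N) ℂ)).det = 0)
    (d : ℂ) (hd : HasDerivWithinAt l d (Set.Ioc (1 - η) (1 : ℝ)) 1) :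
    d = Complex.exp ((θ : ℂ) * Complex.I)
        * (Complex.normSq (star u ⬝ᵥ v) : ℂ) := by
  set c := Complex.exp ((θ : ℂ) * Complex.I) with hcdef
  have hc : c * star c = 1 := by
    have h := Complex.mul_conj c
    rw [Complex.normSq_eq_norm_sq, hcdef, Complex.norm_exp_ofReal_mul_I] at h
    simpa using h
  have huu := star_dot_self u hu
  have hleft := left_eig U hU c hc u heig
  have hdet0 := det_bordered U c u huu heig hleft hsimple
  let D : ℂ → Matrix (Fin N) (Fin N) ℂ := fun m =>
    U - m • (1 : Matrix (Fin N) (Fin N) ℂ) + vecMulVec u (star u)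
  let q : ℂ → ℂ := fun m => star v ⬝ᵥ ((D m).adjugate *ᵥ (U *ᵥ v))
  have hDc : Continuous D := by fun_prop
  have hdc : Continuous fun m => (D m).det := hDc.matrix_det
  have hqc : Continuous q :=
    continuous_const.dotProduct (hDc.matrix_adjugate.matrix_mulVec continuous_const)
  set S := Set.Ioc (1 - η) (1 : ℝ) \ {1} with hS
  have hslope := hasDerivWithinAt_iff_tendsto_slope.mp hd
  have hl : Filter.Tendsto l (nhdsWithin 1 S) (nhds c) := by
    rw [← hl1]
    exact hd.continuousWithinAt.mono Set.sdiff_subset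
  have hs : Filter.Tendsto (fun t : ℝ => (1 : ℂ) - (t : ℂ)) (nhdsWithin 1 S) (nhds 0) := by
    have : Continuous fun t : ℝ => (1 : ℂ) - (t : ℂ) := by fun_prop
    have h := (this.tendsto 1).mono_left (nhdsWithin_le_nhds (s := S))
    simpa using h
  have hdl : Filter.Tendsto (fun t => (D (l t)).det) (nhdsWithin 1 S) (nhds (D c).det) :=
    (hdc.tendsto c).comp hl
  have hql : Filter.Tendsto (fun t => q (l t)) (nhdsWithin 1 S) (nhds (q c)) :=
    (hqc.tendsto c).comp hl
  have hK : Filter.Tendsto (fun t : ℝ => (1 - (l t - c)) *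
      ((D (l t)).det - ((1 : ℂ) - (t : ℂ)) * q (l t))) (nhdsWithin 1 S) (nhds (D c).det) := by
    have := ((hl.sub_const c).const_sub 1).mul (hdl.sub (hs.mul hql))
    simpa using this
  have hL := hslope.mul hK
  have hR : Filter.Tendsto (fun t => c * (star u ⬝ᵥ v) * (D (l t)).det * (star v ⬝ᵥ u))
      (nhdsWithin 1 S) (nhds (c * (star u ⬝ᵥ v) * (D c).det * (star v ⬝ᵥ u))) :=
    (hdl.const_mul _).mul_const _
  have hne : (nhdsWithin (1 : ℝ) S).NeBot := by
    have : S = Set.Ioo (1 - η) 1 := by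
      rw [hS, Set.Ioc_sdiff_right]
    rw [this, nhdsWithin_Ioo_eq_nhdsLT (by linarith)]
    infer_instance
  have heq : (fun t => slope l 1 t * ((1 - (l t - c)) *
      ((D (l t)).det - ((1 : ℂ) - (t : ℂ)) * q (l t)))) =ᶠ[nhdsWithin 1 S]
      (fun t => c * (star u ⬝ᵥ v) * (D (l t)).det * (star v ⬝ᵥ u)) := by
    filter_upwards [hdl.eventually_ne hdet0, hK.eventually_ne hdet0, self_mem_nhdsWithin]
      with t h1 h2 h3
    have hsec := secular U c u v huu heig hleft (l t) ((1 : ℂ) - (t : ℂ)) (D (l t)) rfl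
      (q (l t)) rfl (hleig t h3.1) h1 h2
    have ht : (t : ℂ) - 1 ≠ 0 := by
      intro h
      apply h3.2
      have h' : (t : ℂ) = ((1 : ℝ) : ℂ) := by rw [Complex.ofReal_one]; linear_combination h
      exact Complex.ofReal_injective h'
    have hsl : slope l 1 t = ((t : ℂ) - 1)⁻¹ * (l t - c) := by
      rw [slope_def_module, hl1, Complex.real_smul]
      push_cast
      rfl
    apply mul_left_cancel₀ ht
    rw [hsl]
    have hi : ((t : ℂ) - 1) * ((t : ℂ) - 1)⁻¹ = 1 := mul_inv_cancel₀ ht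
    linear_combination (l t - c) * ((1 - (l t - c)) *
      ((D (l t)).det - ((1 : ℂ) - (t : ℂ)) * q (l t))) * hi - hsec
  have hfin := tendsto_nhds_unique (hL.congr' heq) hR
  have hvu : (star u ⬝ᵥ v) * (star v ⬝ᵥ u) = (Complex.normSq (star u ⬝ᵥ v) : ℂ) := by
    rw [← Complex.mul_conj]
    congr 1
    change _ = star (star u ⬝ᵥ v)
    rw [← star_dotProduct_star, star_star]
  apply mul_right_cancel₀ hdet0
  rw [← hvu]
  linear_combination hfin

end
end
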